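/- arXiv:2004.14763 — 2 statements merged into one kernel-verified Lean document; each statement's English description precedes it below -/
import Mathlib

section
/- Let p be a prime and let μ be the Haar measure on ℚ_p normalized so that μ(ℤ_p) = 1, with μ³ the product measure on ℚ_p³. For (x,y,z) ∈ ℚ_p³ set H(x,y,z) = max(1, |x|_p, |y|_p, |z|_p), and for an integer m ≥ 1 let δ_m(x,y,z) = 1 if H(x,y,z) = 1 or H(x,y,z) ≥ p^m, and δ_m(x,y,z) = 0 otherwise. Then for every complex number s with Re(s) > 3, ∫_{ℚ_p³} H(x,y,z)^{−s} · δ_m(x,y,z) dμ³ = 1 + (1 − p^{−3}) · p^{−m(s−3)} / (1 − p^{−(s−3)}). -/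
open MeasureTheory

/-!
The integrand depends only on the height `H = max(1, |x|, |y|, |z|)`, which takes values in
`{p ^ n : n ∈ ℕ}`. So the integral is a sum over the shells `H = p ^ n`.

The ball `|x| ≤ p ^ n` in `ℚ_p` is a disjoint union of the `p ^ n` translates `i / p ^ n + ℤ_p`
(`0 ≤ i < p ^ n`), hence has measure `p ^ n` (`measure_ball`). Therefore `{H ≤ p ^ n}`, a product of
three balls, has measure `p ^ (3 n)`, and the shell `H = p ^ n` has measure `1` for `n = 0` and
`p ^ (3 n) (1 - p ^ (-3))` for `n ≥ 1` (`measureReal_shell_succ`). With `r = p ^ (-(s - 3))` the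
shell `n ≥ 1` thus contributes `(1 - p ^ (-3)) r ^ n` when `n ≥ m` and nothing otherwise, and
`|r| < 1` because `Re s > 3`; summing the geometric series gives the formula.
-/

namespace PadicHeight

variable {p : ℕ} [Fact p.Prime]

/-- The height `H(x, y, z) = max(1, |x|, |y|, |z|)` on `ℚ_p³`. -/
noncomputable def height (v : ℚ_[p] × ℚ_[p] × ℚ_[p]) : ℝ :=
  max 1 (max ‖v.1‖ (max ‖v.2.1‖ ‖v.2.2‖))

/-- The set of points of height exactly `p ^ n`. -/
def shell (p : ℕ) [Fact p.Prime] (n : ℕ) : Set (ℚ_[p] × ℚ_[p] × ℚ_[p]) :=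
  {v | height v = (p : ℝ) ^ n}

lemma one_lt_p : (1 : ℝ) < p := by exact_mod_cast (Fact.out : p.Prime).one_lt

lemma norm_le_one_or_eq_pow (x : ℚ_[p]) : ‖x‖ ≤ 1 ∨ ∃ n : ℕ, ‖x‖ = (p : ℝ) ^ n := by
  by_cases hx : x = 0
  · left; simp [hx]
  rw [Padic.norm_eq_zpow_neg_valuation hx]
  rcases le_total (-x.valuation) 0 with h | h
  · left; exact zpow_le_one_of_nonpos₀ one_lt_p.le h
  · right
    obtain ⟨n, hn⟩ := Int.eq_ofNat_of_zero_le h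
    exact ⟨n, by rw [hn]; simp⟩

lemma exists_height_eq (v : ℚ_[p] × ℚ_[p] × ℚ_[p]) : ∃ n : ℕ, height v = (p : ℝ) ^ n := by
  have key : ∀ a b : ℝ, (a ≤ 1 ∨ ∃ n : ℕ, a = (p : ℝ) ^ n) → (b ≤ 1 ∨ ∃ n : ℕ, b = (p : ℝ) ^ n) →
      (max a b ≤ 1 ∨ ∃ n : ℕ, max a b = (p : ℝ) ^ n) := by
    intro a b ha hb
    rcases max_choice a b with h | h <;> rw [h] <;> assumption
  rcases key _ _ (norm_le_one_or_eq_pow v.1)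
    (key _ _ (norm_le_one_or_eq_pow v.2.1) (norm_le_one_or_eq_pow v.2.2)) with h | ⟨n, h⟩
  · exact ⟨0, by simp [height] at h ⊢; exact h⟩
  · exact ⟨n, by rw [height, h]; exact max_eq_right (one_le_pow₀ one_lt_p.le)⟩

lemma pow_injective : Function.Injective (fun n : ℕ => (p : ℝ) ^ n) :=
  pow_right_injective₀ (by linarith [one_lt_p (p := p)]) (one_lt_p (p := p)).ne'

lemma shell_zero : shell p 0 = {v | height v ≤ (p : ℝ) ^ 0} := by
  ext v
  simp only [shell, Set.mem_ofPred_eq, pow_zero]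
  exact ⟨le_of_eq, fun h => le_antisymm h (le_max_left _ _)⟩

lemma shell_succ (n : ℕ) :
    shell p (n + 1) = {v | height v ≤ (p : ℝ) ^ (n + 1)} \ {v | height v ≤ (p : ℝ) ^ n} := by
  ext v
  obtain ⟨k, hk⟩ := exists_height_eq v
  have hp := one_lt_p (p := p)
  simp only [shell, Set.mem_ofPred_eq, Set.mem_sdiff, hk, pow_le_pow_iff_right₀ hp,
    (pow_injective (p := p)).eq_iff]
  omega

lemma height_le_eq_prod (n : ℕ) :
    {v : ℚ_[p] × ℚ_[p] × ℚ_[p] | height v ≤ (p : ℝ) ^ n} =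
      {x | ‖x‖ ≤ (p : ℝ) ^ n} ×ˢ ({x | ‖x‖ ≤ (p : ℝ) ^ n} ×ˢ {x | ‖x‖ ≤ (p : ℝ) ^ n}) := by
  ext v
  have : (1 : ℝ) ≤ (p : ℝ) ^ n := one_le_pow₀ one_lt_p.le
  simp [height, this]

/-- The ball of radius `p ^ n` splits into the cosets `i / p ^ n + ℤ_p`, `0 ≤ i < p ^ n`. -/
lemma ball_eq_iUnion (n : ℕ) :
    {x : ℚ_[p] | ‖x‖ ≤ (p : ℝ) ^ n} = ⋃ i ∈ Finset.range (p ^ n),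
      (fun x => -((i : ℚ_[p]) / (p : ℚ_[p]) ^ n) + x) ⁻¹' {x : ℚ_[p] | ‖x‖ ≤ 1} := by
  have hp0 : (p : ℚ_[p]) ≠ 0 := by exact_mod_cast (Fact.out : p.Prime).ne_zero
  have hpR : (0 : ℝ) < (p : ℝ) ^ n := pow_pos (by linarith [one_lt_p (p := p)]) n
  have hnorm : ‖(p : ℚ_[p]) ^ n‖ = ((p : ℝ) ^ n)⁻¹ := by simp
  ext x
  simp only [Set.mem_ofPred_eq, Set.mem_iUnion, Finset.mem_range, Set.mem_preimage, exists_prop]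
  constructor
  · intro hx
    have hy : ‖x * (p : ℚ_[p]) ^ n‖ ≤ 1 := by
      rw [norm_mul, hnorm]
      exact (mul_inv_le_iff₀ hpR).2 (by simpa using hx)
    set y : ℤ_[p] := ⟨x * (p : ℚ_[p]) ^ n, hy⟩ with hydef
    refine ⟨y.appr n, y.appr_lt n, ?_⟩
    have h := (PadicInt.norm_le_pow_iff_mem_span_pow _ n).2 (PadicInt.appr_spec n y)
    rw [PadicInt.norm_def] at h
    have he : -((y.appr n : ℚ_[p]) / (p : ℚ_[p]) ^ n) + x
        = ((y - (y.appr n : ℤ_[p]) : ℤ_[p]) : ℚ_[p]) / (p : ℚ_[p]) ^ n := by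
      have h1 : ((y - (y.appr n : ℤ_[p]) : ℤ_[p]) : ℚ_[p])
          = x * (p : ℚ_[p]) ^ n - (y.appr n : ℚ_[p]) := by
        push_cast; rfl
      rw [h1]
      field_simp
      ring
    rw [he, norm_div, hnorm, div_inv_eq_mul]
    rw [zpow_neg, zpow_natCast] at h
    calc _ ≤ ((p : ℝ) ^ n)⁻¹ * (p : ℝ) ^ n := by gcongr
      _ = 1 := inv_mul_cancel₀ hpR.ne'
  · rintro ⟨i, -, hi⟩
    have hi' : ‖(i : ℚ_[p]) / (p : ℚ_[p]) ^ n‖ ≤ (p : ℝ) ^ n := by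
      rw [norm_div, hnorm, div_inv_eq_mul]
      have : ‖(i : ℚ_[p])‖ ≤ 1 := by exact_mod_cast Padic.norm_int_le_one (p := p) (i : ℤ)
      exact mul_le_of_le_one_left hpR.le this
    have := Padic.nonarchimedean ((i : ℚ_[p]) / (p : ℚ_[p]) ^ n)
      (-((i : ℚ_[p]) / (p : ℚ_[p]) ^ n) + x)
    rw [add_neg_cancel_left] at this
    exact this.trans (max_le hi' (hi.trans (one_le_pow₀ one_lt_p.le)))

lemma ball_cosets_disjoint (n : ℕ) :
    (↑(Finset.range (p ^ n)) : Set ℕ).PairwiseDisjoint fun i =>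
      (fun x => -((i : ℚ_[p]) / (p : ℚ_[p]) ^ n) + x) ⁻¹' {x : ℚ_[p] | ‖x‖ ≤ 1} := by
  have hpR : (0 : ℝ) < (p : ℝ) ^ n := pow_pos (by linarith [one_lt_p (p := p)]) n
  have hnorm : ‖(p : ℚ_[p]) ^ n‖ = ((p : ℝ) ^ n)⁻¹ := by simp
  intro i hi j hj hij
  rw [Function.onFun, Set.disjoint_left]
  intro x hx hx'
  simp only [Set.mem_preimage, Set.mem_ofPred_eq, Finset.coe_range, Set.mem_Iio] at hx hx' hi hj
  apply hij
  have hd := Padic.nonarchimedean (-((i : ℚ_[p]) / (p : ℚ_[p]) ^ n) + x)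
    (-(-((j : ℚ_[p]) / (p : ℚ_[p]) ^ n) + x))
  rw [norm_neg, show -((i : ℚ_[p]) / (p : ℚ_[p]) ^ n) + x + -(-((j : ℚ_[p]) / (p : ℚ_[p]) ^ n) + x)
    = (((j : ℤ) - (i : ℤ) : ℤ) : ℚ_[p]) / (p : ℚ_[p]) ^ n by push_cast; ring, norm_div, hnorm,
    div_inv_eq_mul] at hd
  have hd' := hd.trans (max_le hx hx')
  have h : ‖(((j : ℤ) - (i : ℤ) : ℤ) : ℚ_[p])‖ ≤ (p : ℝ) ^ (-n : ℤ) := by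
    rw [zpow_neg, zpow_natCast]
    exact (le_inv_mul_iff₀' hpR).2 hd' |>.trans_eq (mul_one _)
  rw [Padic.norm_int_le_pow_iff_dvd] at h
  have h2 : i ≡ j [MOD p ^ n] := (Nat.modEq_iff_dvd).2 (by exact_mod_cast h)
  exact Nat.ModEq.eq_of_lt_of_lt h2 hi hj

variable [MeasurableSpace ℚ_[p]] [BorelSpace ℚ_[p]]

lemma measurableSet_ball (r : ℝ) : MeasurableSet {x : ℚ_[p] | ‖x‖ ≤ r} :=
  measurableSet_le measurable_norm measurable_const

lemma measure_ball (μ : Measure ℚ_[p]) [μ.IsAddHaarMeasure]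
    (hμ : μ {x : ℚ_[p] | ‖x‖ ≤ 1} = 1) (n : ℕ) :
    μ {x : ℚ_[p] | ‖x‖ ≤ (p : ℝ) ^ n} = (p : ENNReal) ^ n := by
  rw [ball_eq_iUnion, measure_biUnion_finset (ball_cosets_disjoint n)]
  · simp_rw [measure_preimage_add, hμ]
    simp
  · intro i _
    exact measurable_const_add _ (measurableSet_ball 1)

lemma measurableSet_height_le (n : ℕ) :
    MeasurableSet {v : ℚ_[p] × ℚ_[p] × ℚ_[p] | height v ≤ (p : ℝ) ^ n} := by
  rw [height_le_eq_prod]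
  exact (measurableSet_ball _).prod ((measurableSet_ball _).prod (measurableSet_ball _))

lemma measurableSet_shell (n : ℕ) : MeasurableSet (shell p n) := by
  cases n with
  | zero => rw [shell_zero]; exact measurableSet_height_le 0
  | succ n => rw [shell_succ]; exact (measurableSet_height_le _).diff (measurableSet_height_le _)

lemma measure_height_le (μ : Measure ℚ_[p]) [μ.IsAddHaarMeasure]
    (hμ : μ {x : ℚ_[p] | ‖x‖ ≤ 1} = 1) (n : ℕ) :
    μ.prod (μ.prod μ) {v | height v ≤ (p : ℝ) ^ n} = (p : ENNReal) ^ (3 * n) := by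
  rw [height_le_eq_prod, Measure.prod_prod, Measure.prod_prod, measure_ball μ hμ]
  ring

lemma measure_height_le_ne_top (μ : Measure ℚ_[p]) [μ.IsAddHaarMeasure]
    (hμ : μ {x : ℚ_[p] | ‖x‖ ≤ 1} = 1) (n : ℕ) :
    μ.prod (μ.prod μ) {v | height v ≤ (p : ℝ) ^ n} ≠ ⊤ := by
  rw [measure_height_le μ hμ]
  exact ENNReal.pow_ne_top (ENNReal.natCast_ne_top p)

lemma measure_shell_ne_top (μ : Measure ℚ_[p]) [μ.IsAddHaarMeasure]
    (hμ : μ {x : ℚ_[p] | ‖x‖ ≤ 1} = 1) (n : ℕ) :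
    μ.prod (μ.prod μ) (shell p n) ≠ ⊤ :=
  measure_ne_top_of_subset (fun _ hv => le_of_eq hv) (measure_height_le_ne_top μ hμ n)

lemma measureReal_shell_zero (μ : Measure ℚ_[p]) [μ.IsAddHaarMeasure]
    (hμ : μ {x : ℚ_[p] | ‖x‖ ≤ 1} = 1) :
    (μ.prod (μ.prod μ)).real (shell p 0) = 1 := by
  rw [shell_zero, Measure.real, measure_height_le μ hμ]
  simp

lemma measureReal_shell_succ (μ : Measure ℚ_[p]) [μ.IsAddHaarMeasure]
    (hμ : μ {x : ℚ_[p] | ‖x‖ ≤ 1} = 1) (n : ℕ) :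
    (μ.prod (μ.prod μ)).real (shell p (n + 1)) = (p : ℝ) ^ (3 * (n + 1)) - (p : ℝ) ^ (3 * n) := by
  have hsub : {v : ℚ_[p] × ℚ_[p] × ℚ_[p] | height v ≤ (p : ℝ) ^ n} ⊆
      {v | height v ≤ (p : ℝ) ^ (n + 1)} := fun v hv =>
    le_trans (b := (p : ℝ) ^ n) hv (pow_le_pow_right₀ one_lt_p.le n.le_succ)
  rw [shell_succ, measureReal_sdiff hsub (measurableSet_height_le n)
    (measure_height_le_ne_top μ hμ (n + 1))]
  simp only [Measure.real, measure_height_le μ hμ]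
  simp

end PadicHeight

/-- The local height integral at a good place for the compactification `ℙ³` of the
Heisenberg group: with `μ` the Haar measure on `ℚ_p` normalized by `μ(ℤ_p) = 1`,
`H(x,y,z) = max(1,|x|_p,|y|_p,|z|_p)` and `δ_m` the Campana indicator (`H = 1` or
`H ≥ p^m`), for `Re(s) > 3` one has
`∫_{ℚ_p³} H^{−s} δ_m dμ³ = 1 + (1 − p^{−3}) p^{−m(s−3)} / (1 − p^{−(s−3)})`. -/
theorem padic_heisenberg_height_integral (p : ℕ) [Fact p.Prime]
    [MeasurableSpace ℚ_[p]] [BorelSpace ℚ_[p]]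
    (μ : Measure ℚ_[p]) [μ.IsAddHaarMeasure]
    (hμ : μ {x : ℚ_[p] | ‖x‖ ≤ 1} = 1)
    (m : ℕ) (hm : 1 ≤ m) (s : ℂ) (hs : 3 < s.re) :
    ∫ v : ℚ_[p] × ℚ_[p] × ℚ_[p],
        (((max 1 (max ‖v.1‖ (max ‖v.2.1‖ ‖v.2.2‖)) : ℝ) : ℂ) ^ (-s)) *
          (if max 1 (max ‖v.1‖ (max ‖v.2.1‖ ‖v.2.2‖)) = 1 ∨
              (p : ℝ) ^ m ≤ max 1 (max ‖v.1‖ (max ‖v.2.1‖ ‖v.2.2‖)) then 1 else 0)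
        ∂(μ.prod (μ.prod μ))
      = 1 + (1 - (p : ℂ) ^ (-(3 : ℂ))) * (p : ℂ) ^ (-(m : ℂ) * (s - 3)) /
          (1 - (p : ℂ) ^ (-(s - 3))) := by
  have hpp : p.Prime := Fact.out
  have hp1 := PadicHeight.one_lt_p (p := p)
  have hpC : (p : ℂ) ≠ 0 := by exact_mod_cast hpp.ne_zero
  set ν := μ.prod (μ.prod μ) with hν
  set r : ℂ := (p : ℂ) ^ (-(s - 3)) with hr
  set K : ℂ := 1 - (p : ℂ) ^ (-(3 : ℂ)) with hK
  -- The value of the integrand on the shell of height `p ^ n`.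
  let c : ℕ → ℂ := fun n => (((p : ℝ) ^ n : ℝ) : ℂ) ^ (-s) * (if n = 0 ∨ m ≤ n then 1 else 0)
  let F : ℕ → ℚ_[p] × ℚ_[p] × ℚ_[p] → ℂ := fun n =>
    (PadicHeight.shell p n).indicator (fun _ => c n)
  have hr1 : ‖r‖ < 1 := by
    rw [hr, Complex.norm_natCast_cpow_of_pos hpp.pos]
    exact Real.rpow_lt_one_of_one_lt_of_neg hp1 (by simp; linarith)
  have hrm : (p : ℂ) ^ (-(m : ℂ) * (s - 3)) = r ^ m := by
    rw [hr, ← Complex.cpow_nat_mul]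
    congr 1
    ring
  have hF : ∀ n, ∫ v, F n v ∂ν = ν.real (PadicHeight.shell p n) * c n := fun n => by
    rw [integral_indicator_const _ (PadicHeight.measurableSet_shell n), Complex.real_smul]
  have hFn : ∀ n, ∫ v, ‖F n v‖ ∂ν = ‖(ν.real (PadicHeight.shell p n) : ℂ) * c n‖ := fun n => by
    simp only [F, norm_indicator_eq_indicator_norm]
    rw [integral_indicator_const _ (PadicHeight.measurableSet_shell n),
      norm_mul (ν.real (PadicHeight.shell p n) : ℂ), Complex.norm_real, Real.norm_of_nonneg measureReal_nonneg, smul_eq_mul]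
  have hterm : ∀ n, (ν.real (PadicHeight.shell p n) : ℂ) * c n =
      (if n = 0 then 1 else 0) + (if m ≤ n then K * r ^ n else 0) := by
    intro n
    cases n with
    | zero =>
      rw [PadicHeight.measureReal_shell_zero μ hμ]
      simp [c, show m ≠ 0 by omega]
    | succ n =>
      rw [PadicHeight.measureReal_shell_succ μ hμ]
      by_cases hmn : m ≤ n + 1
      · have h1 : (((p : ℝ) ^ (n + 1) : ℝ) : ℂ) ^ (-s) = ((p : ℂ) ^ (-s)) ^ (n + 1) := by
          push_cast
          rw [← Complex.natCast_cpow_natCast_mul, ← Complex.cpow_nat_mul]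
        have h2 : r = (p : ℂ) ^ (-s) * (p : ℂ) ^ 3 := by
          rw [hr, show -(s - 3) = -s + (3 : ℕ) by push_cast; ring, Complex.cpow_add _ _ hpC,
            Complex.cpow_natCast]
        have h3 : K = 1 - ((p : ℂ) ^ 3)⁻¹ := by
          rw [hK, Complex.cpow_neg, show (3 : ℂ) = ((3 : ℕ) : ℂ) by norm_num, Complex.cpow_natCast]
        simp only [c, h1, h2, h3, hmn, or_true, if_true, Nat.succ_ne_zero, if_false]
        push_cast
        field_simp
        ring
      · simp [c, hmn]
  have hsum : HasSum (fun n => (ν.real (PadicHeight.shell p n) : ℂ) * c n)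
      (1 + K * r ^ m / (1 - r)) := by
    simp_rw [hterm]
    refine (hasSum_ite_eq 0 (1 : ℂ)).add ?_
    have hg : HasSum (fun n => if m ≤ n + m then K * r ^ (n + m) else 0)
        (K * r ^ m / (1 - r)) := by
      have := (hasSum_geometric_of_norm_lt_one hr1).mul_left (K * r ^ m)
      simpa [pow_add, mul_assoc, mul_comm, mul_left_comm, div_eq_mul_inv] using this
    have h := (hasSum_nat_add_iff (f := fun n => if m ≤ n then K * r ^ n else 0) m).1 hg
    rwa [Finset.sum_eq_zero, add_zero] at h
    intro i hi
    exact if_neg (by simpa using hi)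
  have hI := hasSum_integral_of_summable_integral_norm (μ := ν) (F := F)
    (fun n => (integrable_indicator_iff (PadicHeight.measurableSet_shell n)).2
      (integrableOn_const (PadicHeight.measure_shell_ne_top μ hμ n)))
    (by simp_rw [hFn]; exact hsum.summable.norm)
  simp_rw [hF] at hI
  rw [hrm, ← hI.unique hsum]
  congr 1
  funext v
  obtain ⟨k, hk⟩ := PadicHeight.exists_height_eq v
  have hk1 : (p : ℝ) ^ k = 1 ↔ k = 0 := by
    simpa using (PadicHeight.pow_injective (p := p)).eq_iff (a := k) (b := 0)
  rw [tsum_eq_single k]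
  · have hmem : v ∈ PadicHeight.shell p k := hk
    rw [PadicHeight.height] at hk
    simp only [F, Set.indicator_of_mem hmem, c, hk, hk1, pow_le_pow_iff_right₀ hp1]
  · intro n hn
    refine Set.indicator_of_notMem (fun hv => hn ?_) _
    exact PadicHeight.pow_injective (p := p) (hv.symm.trans hk)
end

section
/- For every real number s > 3, the function (x, y, z) ↦ max(1, |x|, |y|, |z|)^{−s} is integrable on ℝ³ with respect to Lebesgue measure, and its integral equals 8s/(s − 3). In particular, the function s ↦ ∫_{ℝ³} max(1, |x|, |y|, |z|)^{−s} dx dy dz, defined for s > 3, has a simple pole at s = 3 (with residue 24). -/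
open MeasureTheory

/-!
The integrand depends only on the sup norm `‖v‖ = max |x| |y| |z|` of `ℝ × ℝ × ℝ`, whose unit ball
is a cube of volume `8`. Integration in polar coordinates (`integral_fun_norm_addHaar`) therefore
gives `3 * 8 * ∫_0^∞ r² max(1, r)^{-s} dr`, and splitting the radial integral at `r = 1`
(`radial_integral`) evaluates it to `24 (1/3 + 1/(s - 3)) = 8 s / (s - 3)`.
The residue is then the limit of `8 s` as `s → 3`.
-/

/-- The unit ball of `ℝ³` for the sup norm is the cube `(-1, 1)³`. -/
lemma volume_real_unit_ball :
    (volume : Measure (ℝ × ℝ × ℝ)).real (Metric.ball 0 1) = 8 := by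
  have h : Metric.ball (0 : ℝ × ℝ × ℝ) 1
      = Metric.ball (0 : ℝ) 1 ×ˢ (Metric.ball (0 : ℝ) 1 ×ˢ Metric.ball (0 : ℝ) 1) := by
    rw [ball_prod_same, ball_prod_same]
    rfl
  rw [h, Measure.volume_eq_prod, measureReal_prod_prod, Measure.volume_eq_prod,
    measureReal_prod_prod, Real.volume_real_ball zero_le_one]
  norm_num

/-- The radial part of the height integral, `∫_0^1 r² dr + ∫_1^∞ r^{2-s} dr`. -/
lemma radial_integral {s : ℝ} (hs : 3 < s) :
    IntegrableOn (fun r : ℝ => r ^ 2 * (max 1 r) ^ (-s)) (Set.Ioi 0) ∧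
    ∫ r in Set.Ioi (0 : ℝ), r ^ 2 * (max 1 r) ^ (-s) = 1 / 3 + 1 / (s - 3) := by
  have e1 : Set.EqOn (fun r : ℝ => r ^ 2) (fun r : ℝ => r ^ 2 * (max 1 r) ^ (-s))
      (Set.Ioc 0 1) := by
    intro r hr
    simp [max_eq_left hr.2]
  have e2 : Set.EqOn (fun r : ℝ => r ^ (2 - s)) (fun r : ℝ => r ^ 2 * (max 1 r) ^ (-s))
      (Set.Ioi 1) := by
    intro r hr
    have hr1 : (1 : ℝ) < r := hr
    simp only [max_eq_right hr1.le]
    rw [sub_eq_add_neg, Real.rpow_add (by linarith), Real.rpow_two]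
  have i1 : IntegrableOn (fun r : ℝ => r ^ 2 * (max 1 r) ^ (-s)) (Set.Ioc 0 1) :=
    (((continuous_pow 2).integrableOn_Icc (a := (0 : ℝ)) (b := 1)).mono_set
      Set.Ioc_subset_Icc_self).congr_fun e1 measurableSet_Ioc
  have i2 : IntegrableOn (fun r : ℝ => r ^ 2 * (max 1 r) ^ (-s)) (Set.Ioi 1) :=
    (integrableOn_Ioi_rpow_of_lt (by linarith) one_pos).congr_fun e2 measurableSet_Ioi
  rw [← Set.Ioc_union_Ioi_eq_Ioi (zero_le_one (α := ℝ))]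
  refine ⟨i1.union i2, ?_⟩
  rw [setIntegral_union (Set.Ioc_disjoint_Ioi le_rfl) measurableSet_Ioi i1 i2,
    ← setIntegral_congr_fun measurableSet_Ioc e1, ← setIntegral_congr_fun measurableSet_Ioi e2,
    integral_Ioi_rpow_of_lt (by linarith) one_pos, ← intervalIntegral.integral_of_le zero_le_one,
    integral_pow, Real.one_rpow]
  have h1 : s - 3 ≠ 0 := by linarith
  have h2 : 2 - s + 1 ≠ 0 := by linarith
  have h3 : -1 / (2 - s + 1) = 1 / (s - 3) := by
    rw [div_eq_div_iff h2 h1]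
    ring
  rw [h3]
  norm_num

/-- The archimedean height integral for the compactification `ℙ³` of the Heisenberg group:
for `s > 3`, `(x,y,z) ↦ max(1,|x|,|y|,|z|)^{−s}` is Lebesgue-integrable on `ℝ³` with
integral `8s/(s−3)`; in particular `s ↦ ∫_{ℝ³} max(1,|x|,|y|,|z|)^{−s}` has a simple pole
at `s = 3` with residue `24`. -/
theorem archimedean_heisenberg_height_integral :
    (∀ s : ℝ, 3 < s →
      Integrable (fun v : ℝ × ℝ × ℝ =>
        (max 1 (max |v.1| (max |v.2.1| |v.2.2|))) ^ (-s)) ∧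
      ∫ v : ℝ × ℝ × ℝ, (max 1 (max |v.1| (max |v.2.1| |v.2.2|))) ^ (-s)
        = 8 * s / (s - 3)) ∧
    Filter.Tendsto
      (fun s : ℝ => (s - 3) *
        ∫ v : ℝ × ℝ × ℝ, (max 1 (max |v.1| (max |v.2.1| |v.2.2|))) ^ (-s))
      (nhdsWithin 3 (Set.Ioi 3)) (nhds 24) := by
  have hmain : ∀ s : ℝ, 3 < s →
      Integrable (fun v : ℝ × ℝ × ℝ =>
        (max 1 (max |v.1| (max |v.2.1| |v.2.2|))) ^ (-s)) ∧
      ∫ v : ℝ × ℝ × ℝ, (max 1 (max |v.1| (max |v.2.1| |v.2.2|))) ^ (-s)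
        = 8 * s / (s - 3) := by
    intro s hs
    have hdim : Module.finrank ℝ (ℝ × ℝ × ℝ) = 3 := by simp
    have hnorm : (fun v : ℝ × ℝ × ℝ => (max 1 (max |v.1| (max |v.2.1| |v.2.2|))) ^ (-s))
        = fun v => (fun r : ℝ => (max 1 r) ^ (-s)) ‖v‖ := by
      funext v
      simp [Prod.norm_def]
    obtain ⟨hi, he⟩ := radial_integral hs
    have : (volume : Measure (ℝ × ℝ)).IsAddHaarMeasure :=
      Measure.prod.instIsAddHaarMeasure volume volume
    have : (volume : Measure (ℝ × ℝ × ℝ)).IsAddHaarMeasure :=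
      Measure.prod.instIsAddHaarMeasure volume volume
    rw [hnorm]
    constructor
    · rw [integrable_fun_norm_addHaar (volume : Measure (ℝ × ℝ × ℝ))
        (f := fun r : ℝ => (max 1 r) ^ (-s)), hdim]
      simpa using hi
    · rw [integral_fun_norm_addHaar (volume : Measure (ℝ × ℝ × ℝ))
        (fun r : ℝ => (max 1 r) ^ (-s)), hdim, volume_real_unit_ball]
      simp only [smul_eq_mul, nsmul_eq_mul, Nat.add_one_sub_one]
      rw [he]
      have h1 : s - 3 ≠ 0 := by linarith
      push_cast
      field_simp
      ring
  refine ⟨hmain, ?_⟩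
  have hlim : Filter.Tendsto (fun s : ℝ => 8 * s) (nhdsWithin 3 (Set.Ioi 3)) (nhds 24) := by
    have h : Filter.Tendsto (fun s : ℝ => 8 * s) (nhds 3) (nhds (8 * 3)) :=
      (continuous_const.mul continuous_id).tendsto 3
    norm_num at h
    exact h.mono_left nhdsWithin_le_nhds
  refine hlim.congr' ?_
  filter_upwards [self_mem_nhdsWithin] with s hs
  have hs3 : (3 : ℝ) < s := hs
  rw [(hmain s hs3).2, mul_div_cancel₀ _ (by linarith : s - 3 ≠ 0)]
end
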